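/- Assume the string equation hypothesis holds for F_0, …, F_g. Then for all integers s ≥ 0, m ≥ 1, every coordinate entry W = τ_p(γ_x) with descendent level p ≥ 1, and all coordinate entries V_1, …, V_s, one has Ψ_{2,s,g,m}(W S | V_1 ⋯ V_s) = −Ψ_{1,s,g,m−1}(W | V_1 ⋯ V_s) + Ψ_{1,s,g,m}(τ_−(W) | V_1 ⋯ V_s), where the entry S is expanded by R-multilinearity of Ψ. -/

import Mathlib

open scoped BigOperators

namespace GWBigPhase

/-- The big phase space coefficient ring: formal power series over `ℚ` in the
variables `t_n^α`, indexed by pairs `(n, α) : ℕ × Fin N`. -/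
abbrev R (N : ℕ) : Type := MvPowerSeries (ℕ × Fin N) ℚ

/-- Partial derivative of a multivariate power series with respect to the
variable indexed by `i`. -/
noncomputable def pderiv (N : ℕ) (i : ℕ × Fin N) (f : R N) : R N :=
  fun e => ((e i : ℚ) + 1) * MvPowerSeries.coeff (R := ℚ) (e + Finsupp.single i 1) f

/-- Coefficientwise (formally convergent) sum of a family of power series. -/
noncomputable def seriesSum (N : ℕ) (f : ℕ × Fin N → R N) : R N :=
  fun e => ∑ᶠ p : ℕ × Fin N, MvPowerSeries.coeff (R := ℚ) e (f p)

/-- The bracket `⟨⟨τ_{n_1}(γ_{α_1}) ⋯ τ_{n_k}(γ_{α_k})⟩⟩_h`: iterated partial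
derivative of `F h`, and `0` whenever some descendent level is negative. -/
noncomputable def Bracket (N : ℕ) (F : ℕ → R N) (h : ℕ) : List (ℤ × Fin N) → R N
  | [] => F h
  | (n, α) :: L => if 0 ≤ n then pderiv N (n.toNat, α) (Bracket N F h L) else 0

/-- `t̃_n^α = t_n^α − δ_{α,1} δ_{n,1}` (the distinguished index `1` is `0 : Fin N`). -/
noncomputable def ttilde (N : ℕ) [NeZero N] (n : ℕ) (α : Fin N) : R N :=
  MvPowerSeries.X (n, α) - if n = 1 ∧ α = 0 then 1 else 0

/-- Interpret a list of coordinate entries `τ_n(γ_α)` with `n : ℕ` as entries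
with integer descendent levels. -/
def coordList (N : ℕ) (L : List (ℕ × Fin N)) : List (ℤ × Fin N) :=
  L.map (fun p => ((p.1 : ℤ), p.2))

/-- Lower the descendent level of the `i`-th entry of a list by one (the
operator `τ_-` applied in the `i`-th slot). -/
def lowerAt (N : ℕ) (L : List (ℤ × Fin N)) (i : ℕ) : List (ℤ × Fin N) :=
  L.mapIdx (fun j p => if j = i then (p.1 - 1, p.2) else p)

/-- The quantity `Ψ_{r,s,g,m}(W_1 ⋯ W_r | V_1 ⋯ V_s)`, where `r = Ws.length`
and `s = Vs.length`. -/
noncomputable def Psi (N : ℕ) [NeZero N] (ηinv : Matrix (Fin N) (Fin N) ℚ)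
    (F : ℕ → R N) (g m : ℕ) (Ws Vs : List (ℤ × Fin N)) : R N :=
  (∑ k ∈ Finset.range (m + 1), ∑ g1 ∈ Finset.range (g + 1),
      ∑ α : Fin N, ∑ β : Fin N,
        (-1 : R N) ^ k * MvPowerSeries.C (σ := ℕ × Fin N) (R := ℚ) (ηinv α β) *
          Bracket N F g1 (((k : ℤ), α) :: Ws) *
          Bracket N F (g - g1) ((((m - k : ℕ) : ℤ), β) :: Vs))
  - (match Ws with
     | [] => seriesSum N (fun p =>
         ttilde N p.1 p.2 * Bracket N F g (((p.1 : ℤ) + (m : ℤ) + 1, p.2) :: Vs))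
     | [w] => Bracket N F g ((w.1 + (m : ℤ) + 1, w.2) :: Vs)
     | _ => 0)
  + (-1 : R N) ^ (m + 1) *
    (match Vs with
     | [] => seriesSum N (fun p =>
         ttilde N p.1 p.2 * Bracket N F g (((p.1 : ℤ) + (m : ℤ) + 1, p.2) :: Ws))
     | [v] => Bracket N F g (Ws ++ [(v.1 + (m : ℤ) + 1, v.2)])
     | _ => 0)

/-- `Ψ_{r+1,s,g,m}(W_1 ⋯ W_r S | V_1 ⋯ V_s)`: the value of `Ψ` with the string
vector field `S = −Σ_{n,α} t̃_n^α τ_{n−1}(γ_α)` inserted as the last `W`-entry,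
expanded by `R`-multilinearity of `Ψ`. -/
noncomputable def PsiS (N : ℕ) [NeZero N] (ηinv : Matrix (Fin N) (Fin N) ℚ)
    (F : ℕ → R N) (g m : ℕ) (Ws Vs : List (ℤ × Fin N)) : R N :=
  - seriesSum N (fun p =>
      ttilde N p.1 p.2 * Psi N ηinv F g m (Ws ++ [((p.1 : ℤ) - 1, p.2)]) Vs)

/-- The string equation hypothesis for `F_0, …, F_g`. -/
def StringEqHyp (N : ℕ) [NeZero N] (η : Matrix (Fin N) (Fin N) ℚ)
    (F : ℕ → R N) (g : ℕ) : Prop :=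
  ∀ h : ℕ, h ≤ g →
    pderiv N ((0 : ℕ), (0 : Fin N)) (F h) =
      seriesSum N (fun p => MvPowerSeries.X (p.1 + 1, p.2) * pderiv N p (F h)) +
      (if h = 0 then
        MvPowerSeries.C (σ := ℕ × Fin N) (R := ℚ) (1 / 2) *
          ∑ α : Fin N, ∑ β : Fin N,
            MvPowerSeries.C (σ := ℕ × Fin N) (R := ℚ) (η α β) *
              MvPowerSeries.X ((0 : ℕ), α) * MvPowerSeries.X ((0 : ℕ), β)
       else 0)

section StringOperator

variable {N : ℕ}

/-- The partial derivative along an entry with integer descendent level; it is `0` when the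
level is negative. -/
noncomputable def levelDeriv (a : ℤ × Fin N) : Derivation ℚ (R N) (R N) :=
  if 0 ≤ a.1 then MvPowerSeries.pderiv ℚ (a.1.toNat, a.2) else 0

lemma pderiv_eq (i : ℕ × Fin N) (f : R N) : pderiv N i f = MvPowerSeries.pderiv ℚ i f := by
  ext e
  rw [MvPowerSeries.coeff_pderiv, mul_comm]
  rfl

lemma Bracket_nil (F : ℕ → R N) (h : ℕ) : Bracket N F h [] = F h := rfl

lemma Bracket_cons (F : ℕ → R N) (h : ℕ) (a : ℤ × Fin N) (L : List (ℤ × Fin N)) :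
    Bracket N F h (a :: L) = levelDeriv a (Bracket N F h L) := by
  obtain ⟨n, α⟩ := a
  by_cases hn : 0 ≤ n <;> simp [Bracket, levelDeriv, hn, pderiv_eq]

lemma levelDeriv_natCast (i : ℕ × Fin N) :
    levelDeriv ((i.1 : ℤ), i.2) = MvPowerSeries.pderiv ℚ i := by
  simp [levelDeriv]

lemma levelDeriv_of_neg {a : ℤ × Fin N} (ha : a.1 < 0) : levelDeriv a = 0 :=
  if_neg (not_le.mpr ha)

lemma mvPowerSeries_pderiv_comm (i j : ℕ × Fin N) (f : R N) :
    MvPowerSeries.pderiv ℚ i (MvPowerSeries.pderiv ℚ j f) =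
      MvPowerSeries.pderiv ℚ j (MvPowerSeries.pderiv ℚ i f) := by
  rcases eq_or_ne i j with rfl | hij
  · rfl
  ext e
  simp only [MvPowerSeries.coeff_pderiv, Finsupp.add_apply, Finsupp.single_eq_of_ne hij,
    Finsupp.single_eq_of_ne hij.symm, add_zero, add_right_comm e (Finsupp.single i 1)]
  ring

lemma levelDeriv_comm (a b : ℤ × Fin N) (f : R N) :
    levelDeriv a (levelDeriv b f) = levelDeriv b (levelDeriv a f) := by
  unfold levelDeriv
  split_ifs <;> simp [mvPowerSeries_pderiv_comm (a.1.toNat, a.2)]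

lemma Bracket_swap (F : ℕ → R N) (h : ℕ) (a b : ℤ × Fin N) (L : List (ℤ × Fin N)) :
    Bracket N F h (a :: b :: L) = Bracket N F h (b :: a :: L) := by
  simp only [Bracket_cons, levelDeriv_comm a b]

variable [NeZero N]

/-- The variables whose shifted coordinate `t̃` can contribute to the coefficient at `e`. -/
noncomputable def ttildeSupport (e : ℕ × Fin N →₀ ℕ) : Finset (ℕ × Fin N) :=
  insert (1, 0) e.support

lemma ttildeSupport_mono {d e : ℕ × Fin N →₀ ℕ} (h : d ≤ e) :
    ttildeSupport d ⊆ ttildeSupport e :=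
  Finset.insert_subset_insert _ (Finsupp.support_mono h)

lemma coeff_ttilde_mul_eq_zero {e : ℕ × Fin N →₀ ℕ} {p : ℕ × Fin N}
    (hp : p ∉ ttildeSupport e) (f : R N) :
    MvPowerSeries.coeff e (ttilde N p.1 p.2 * f) = 0 := by
  simp only [ttildeSupport, Finset.mem_insert, Finsupp.mem_support_iff, not_or, not_not] at hp
  have h1 : ¬(p.1 = 1 ∧ p.2 = 0) := fun h => hp.1 (Prod.ext h.1 h.2)
  rw [ttilde, if_neg h1, sub_zero, MvPowerSeries.X, MvPowerSeries.coeff_monomial_mul, if_neg]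
  intro h
  simpa [hp.2] using h p

lemma coeff_seriesSum_ttilde_mul {e : ℕ × Fin N →₀ ℕ} {s : Finset (ℕ × Fin N)}
    (hs : ttildeSupport e ⊆ s) (f : ℕ × Fin N → R N) :
    MvPowerSeries.coeff e (seriesSum N fun p => ttilde N p.1 p.2 * f p) =
      MvPowerSeries.coeff e (∑ p ∈ s, ttilde N p.1 p.2 * f p) := by
  rw [map_sum]
  refine finsum_eq_sum_of_support_subset _ fun p hp => ?_
  by_contra h
  exact hp (coeff_ttilde_mul_eq_zero (fun h' => h (hs h')) _)

lemma coeff_mul_seriesSum_ttilde_mul (e : ℕ × Fin N →₀ ℕ) (c : R N)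
    (f : ℕ × Fin N → R N) :
    MvPowerSeries.coeff e (c * seriesSum N fun p => ttilde N p.1 p.2 * f p) =
      MvPowerSeries.coeff e (c * ∑ p ∈ ttildeSupport e, ttilde N p.1 p.2 * f p) := by
  classical
  simp only [MvPowerSeries.coeff_mul]
  refine Finset.sum_congr rfl fun d hd => ?_
  have hle : d.2 ≤ e := Finset.HasAntidiagonal.mem_antidiagonal.mp hd ▸ le_add_self
  rw [coeff_seriesSum_ttilde_mul (ttildeSupport_mono hle)]

/-- The `R`-linear operator `f ↦ ∑_{n,α} t̃_n^α f_{n,α}`. -/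
noncomputable def ttildeSum : (ℕ × Fin N → R N) →ₗ[R N] R N where
  toFun f := seriesSum N fun p => ttilde N p.1 p.2 * f p
  map_add' f f' := by
    ext e
    simp only [map_add, coeff_seriesSum_ttilde_mul (subset_refl (ttildeSupport e))]
    simp only [Pi.add_apply, mul_add, Finset.sum_add_distrib, map_add]
  map_smul' c f := by
    ext e
    rw [coeff_seriesSum_ttilde_mul (subset_refl (ttildeSupport e)), RingHom.id_apply, smul_eq_mul,
      coeff_mul_seriesSum_ttilde_mul, Finset.mul_sum]
    simp only [Pi.smul_apply, smul_eq_mul, mul_left_comm]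

lemma ttildeSum_apply (f : ℕ × Fin N → R N) :
    ttildeSum f = seriesSum N fun p => ttilde N p.1 p.2 * f p := rfl

lemma ttildeSum_const_mul (c : R N) (f : ℕ × Fin N → R N) :
    ttildeSum (fun p => c * f p) = c * ttildeSum f :=
  ttildeSum.map_smul c f

lemma ttildeSum_sum {ι : Type*} (s : Finset ι) (f : ι → ℕ × Fin N → R N) :
    ttildeSum (fun p => ∑ i ∈ s, f i p) = ∑ i ∈ s, ttildeSum (f i) := by
  rw [← map_sum]
  congr 1
  ext1 p
  simp

lemma ttildeSum_comm (f : ℕ × Fin N → ℕ × Fin N → R N) :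
    ttildeSum (fun p => ttildeSum fun q => f p q) =
      ttildeSum fun q => ttildeSum fun p => f p q := by
  ext e
  simp only [ttildeSum_apply, coeff_seriesSum_ttilde_mul (subset_refl (ttildeSupport e)), map_sum,
    coeff_mul_seriesSum_ttilde_mul, Finset.mul_sum]
  rw [Finset.sum_comm]
  simp only [mul_left_comm]

lemma pderiv_ttilde_mul (i p : ℕ × Fin N) (f : R N) :
    MvPowerSeries.pderiv ℚ i (ttilde N p.1 p.2 * f) =
      (if p = i then f else 0) + ttilde N p.1 p.2 * MvPowerSeries.pderiv ℚ i f := by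
  have hconst : MvPowerSeries.pderiv ℚ i (if p.1 = 1 ∧ p.2 = 0 then 1 else 0 : R N) = 0 := by
    split_ifs <;> simp
  have ht : MvPowerSeries.pderiv ℚ i (ttilde N p.1 p.2) = if p = i then 1 else 0 := by
    rw [ttilde, map_sub, hconst, sub_zero]
    split_ifs with h
    · rw [← h]
      exact MvPowerSeries.pderiv_X_self
    · exact MvPowerSeries.pderiv_X_of_ne h
  rw [Derivation.leibniz, ht, smul_eq_mul, smul_eq_mul, mul_ite, mul_one, mul_zero, add_comm]

lemma pderiv_ttildeSum (i : ℕ × Fin N) (f : ℕ × Fin N → R N) :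
    MvPowerSeries.pderiv ℚ i (ttildeSum f) =
      f i + ttildeSum fun p => MvPowerSeries.pderiv ℚ i (f p) := by
  ext e
  have hle : e ≤ e + Finsupp.single i 1 := le_self_add
  have hi : i ∈ ttildeSupport (e + Finsupp.single i 1) := by simp [ttildeSupport]
  rw [MvPowerSeries.coeff_pderiv, ttildeSum_apply, coeff_seriesSum_ttilde_mul subset_rfl,
    ← MvPowerSeries.coeff_pderiv, map_add, ttildeSum_apply,
    coeff_seriesSum_ttilde_mul (ttildeSupport_mono hle), ← map_add, map_sum]
  simp only [pderiv_ttilde_mul, Finset.sum_add_distrib, Finset.sum_ite_eq', hi, if_true]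

/-- The string vector field `S = -∑_{n,α} t̃_n^α τ_{n-1}(γ_α)` as an operator on `R`. -/
noncomputable def stringOp (f : R N) : R N :=
  -ttildeSum fun p => levelDeriv ((p.1 : ℤ) - 1, p.2) f

lemma stringOp_levelDeriv (n : ℕ) (α : Fin N) (f : R N) :
    stringOp (levelDeriv ((n : ℤ), α) f) =
      levelDeriv ((n : ℤ), α) (stringOp f) + levelDeriv ((n : ℤ) - 1, α) f := by
  simp only [stringOp, map_neg, levelDeriv_comm _ ((n : ℤ), α)]
  simp only [levelDeriv_natCast (n, α), pderiv_ttildeSum]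
  ring

lemma ttildeSum_eq (f : ℕ × Fin N → R N) :
    ttildeSum f = (seriesSum N fun p => MvPowerSeries.X p * f p) - f (1, 0) := by
  ext e
  have hX : MvPowerSeries.coeff e (seriesSum N fun p => MvPowerSeries.X p * f p) =
      MvPowerSeries.coeff e (∑ p ∈ ttildeSupport e, MvPowerSeries.X p * f p) := by
    rw [map_sum]
    refine finsum_eq_sum_of_support_subset _ fun p hp => ?_
    by_contra h
    refine hp ?_
    change MvPowerSeries.coeff e (MvPowerSeries.X p * f p) = 0
    rw [MvPowerSeries.X, MvPowerSeries.coeff_monomial_mul, if_neg]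
    intro hle
    have hmem : p ∉ e.support := fun h' => h (Finset.mem_insert_of_mem h')
    simpa [Finsupp.notMem_support_iff.mp hmem] using hle p
  have hone : ((1 : ℕ), (0 : Fin N)) ∈ ttildeSupport e := Finset.mem_insert_self _ _
  have hite (p : ℕ × Fin N) : (p.1 = 1 ∧ p.2 = 0) ↔ p = (1, 0) :=
    (Prod.ext_iff (y := (1, 0))).symm
  rw [ttildeSum_apply, coeff_seriesSum_ttilde_mul (subset_refl (ttildeSupport e)), map_sub, hX,
    ← map_sub]
  simp only [ttilde, sub_mul, Finset.sum_sub_distrib, hite, ite_mul, one_mul, zero_mul,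
    Finset.sum_ite_eq', hone, if_true]

lemma stringOp_eq (f : R N) :
    stringOp f = pderiv N (0, 0) f -
      seriesSum N fun p => MvPowerSeries.X (p.1 + 1, p.2) * pderiv N p f := by
  have hinj : Function.Injective fun p : ℕ × Fin N => (p.1 + 1, p.2) := by
    rintro ⟨a, b⟩ ⟨c, d⟩ h
    simpa using h
  have hshift : (seriesSum N fun p =>
      MvPowerSeries.X p * levelDeriv ((p.1 : ℤ) - 1, p.2) f) =
      seriesSum N fun p => MvPowerSeries.X (p.1 + 1, p.2) * pderiv N p f := by
    ext e
    change (∑ᶠ p : ℕ × Fin N, MvPowerSeries.coeff e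
        (MvPowerSeries.X p * levelDeriv ((p.1 : ℤ) - 1, p.2) f)) =
      ∑ᶠ p : ℕ × Fin N, MvPowerSeries.coeff e (MvPowerSeries.X (p.1 + 1, p.2) * pderiv N p f)
    have hterm (p : ℕ × Fin N) : pderiv N p f = levelDeriv (((p.1 + 1 : ℕ) : ℤ) - 1, p.2) f := by
      rw [pderiv_eq, Nat.cast_succ, add_sub_cancel_right, levelDeriv_natCast]
    simp only [hterm]
    rw [← finsum_mem_range (f := fun p : ℕ × Fin N => MvPowerSeries.coeff e
        (MvPowerSeries.X p * levelDeriv ((p.1 : ℤ) - 1, p.2) f)) hinj]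
    rw [← finsum_mem_univ]
    refine finsum_mem_inter_support_eq' _ _ _ fun q hq => iff_of_true (Set.mem_univ q) ?_
    obtain ⟨_ | n, α⟩ := q
    · exact (hq (by simp [levelDeriv_of_neg])).elim
    · exact ⟨(n, α), rfl⟩
  rw [stringOp, ttildeSum_eq, hshift, neg_sub, pderiv_eq, ← levelDeriv_natCast]
  simp

lemma levelDeriv_stringOp_eq_zero {η : Matrix (Fin N) (Fin N) ℚ} {F : ℕ → R N} {g h : ℕ}
    (hstring : StringEqHyp N η F g) (hh : h ≤ g) {p : ℕ} (hp : 1 ≤ p) (x : Fin N) :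
    levelDeriv ((p : ℤ), x) (stringOp (F h)) = 0 := by
  have hX (α : Fin N) :
      MvPowerSeries.pderiv ℚ (p, x) (MvPowerSeries.X ((0 : ℕ), α) : R N) = 0 :=
    MvPowerSeries.pderiv_X_of_ne fun h => by
      have := congrArg Prod.fst h
      simp only at this
      omega
  rw [stringOp_eq, hstring h hh, add_sub_cancel_left, levelDeriv_natCast (p, x)]
  split_ifs
  · simp [Derivation.leibniz, hX, map_sum]
  · exact map_zero _

lemma ttildeSum_Bracket {η : Matrix (Fin N) (Fin N) ℚ} {F : ℕ → R N} {g h : ℕ}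
    (hstring : StringEqHyp N η F g) (hh : h ≤ g) {p : ℕ} (hp : 1 ≤ p) (x : Fin N)
    (n : ℕ) (α : Fin N) :
    (ttildeSum fun q =>
        Bracket N F h [((n : ℤ), α), ((p : ℤ), x), ((q.1 : ℤ) - 1, q.2)]) =
      -Bracket N F h [((n : ℤ) - 1, α), ((p : ℤ), x)] -
        Bracket N F h [((n : ℤ), α), ((p : ℤ) - 1, x)] := by
  calc
    _ = -stringOp (levelDeriv ((n : ℤ), α) (levelDeriv ((p : ℤ), x) (F h))) := by
      simp only [stringOp, neg_neg, Bracket_cons, Bracket_nil]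
      congr 1
      ext1 q
      rw [levelDeriv_comm ((p : ℤ), x), levelDeriv_comm ((n : ℤ), α)]
    _ = _ := by
      rw [stringOp_levelDeriv, stringOp_levelDeriv, levelDeriv_stringOp_eq_zero hstring hh hp,
        zero_add]
      simp only [Bracket_cons, Bracket_nil]
      ring

/-- The quadratic part of `Ψ`. -/
noncomputable def quadraticPart (ηinv : Matrix (Fin N) (Fin N) ℚ) (F : ℕ → R N) (g m : ℕ)
    (Ws Vs : List (ℤ × Fin N)) : R N :=
  ∑ k ∈ Finset.range (m + 1), ∑ g1 ∈ Finset.range (g + 1), ∑ α : Fin N, ∑ β : Fin N,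
    (-1 : R N) ^ k * MvPowerSeries.C (σ := ℕ × Fin N) (R := ℚ) (ηinv α β) *
      Bracket N F g1 (((k : ℤ), α) :: Ws) *
      Bracket N F (g - g1) ((((m - k : ℕ) : ℤ), β) :: Vs)

lemma ttildeSum_quadraticPart {η : Matrix (Fin N) (Fin N) ℚ} (ηinv : Matrix (Fin N) (Fin N) ℚ)
    {F : ℕ → R N} {g : ℕ} (hstring : StringEqHyp N η F g) (m : ℕ) {p : ℕ} (hp : 1 ≤ p)
    (x : Fin N) (Vs : List (ℤ × Fin N)) :
    (ttildeSum fun q =>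
        quadraticPart ηinv F g (m + 1) [((p : ℤ), x), ((q.1 : ℤ) - 1, q.2)] Vs) =
      quadraticPart ηinv F g m [((p : ℤ), x)] Vs -
        quadraticPart ηinv F g (m + 1) [((p : ℤ) - 1, x)] Vs := by
  have hshift : quadraticPart ηinv F g m [((p : ℤ), x)] Vs =
      -∑ k ∈ Finset.range (m + 1 + 1), ∑ g1 ∈ Finset.range (g + 1), ∑ α : Fin N, ∑ β : Fin N,
        (-1 : R N) ^ k * MvPowerSeries.C (σ := ℕ × Fin N) (R := ℚ) (ηinv α β) *
          Bracket N F g1 [((k : ℤ) - 1, α), ((p : ℤ), x)] *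
          Bracket N F (g - g1) ((((m + 1 - k : ℕ) : ℤ), β) :: Vs) := by
    have hneg (h : ℕ) (α : Fin N) (L : List (ℤ × Fin N)) :
        Bracket N F h ((((0 : ℕ) : ℤ) - 1, α) :: L) = 0 := by
      rw [Bracket_cons, levelDeriv_of_neg (by simp), Derivation.zero_apply]
    rw [Finset.sum_range_succ']
    simp only [hneg, mul_zero, zero_mul, Finset.sum_const_zero, add_zero, Nat.cast_add,
      Nat.cast_one, add_sub_cancel_right, Nat.add_sub_add_right, quadraticPart, pow_succ,
      mul_neg, mul_one, neg_mul, Finset.sum_neg_distrib, neg_neg]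
  rw [hshift]
  simp only [quadraticPart, ttildeSum_sum, ← Finset.sum_neg_distrib, ← Finset.sum_sub_distrib]
  refine Finset.sum_congr rfl fun k _ => Finset.sum_congr rfl fun g1 hg1 =>
    Finset.sum_congr rfl fun α _ => Finset.sum_congr rfl fun β _ => ?_
  simp only [mul_right_comm _ (Bracket N F g1 _), ttildeSum_const_mul,
    ttildeSum_Bracket hstring (Nat.lt_succ_iff.mp (Finset.mem_range.mp hg1)) hp]
  ring

/-- The correction term of `Ψ` attached to the entries `V_1, …, V_s`. -/
noncomputable def rightTerm (F : ℕ → R N) (g m : ℕ) (Ws Vs : List (ℤ × Fin N)) : R N :=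
  match Vs with
  | [] => ttildeSum fun q => Bracket N F g (((q.1 : ℤ) + (m : ℤ) + 1, q.2) :: Ws)
  | [v] => Bracket N F g (Ws ++ [(v.1 + (m : ℤ) + 1, v.2)])
  | _ => 0

lemma Psi_pair (ηinv : Matrix (Fin N) (Fin N) ℚ) (F : ℕ → R N) (g m : ℕ) (a b : ℤ × Fin N)
    (Vs : List (ℤ × Fin N)) :
    Psi N ηinv F g m [a, b] Vs =
      quadraticPart ηinv F g m [a, b] Vs + (-1) ^ (m + 1) * rightTerm F g m [a, b] Vs :=
  congrArg (· + (-1) ^ (m + 1) * rightTerm F g m [a, b] Vs) (sub_zero _)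

lemma Psi_singleton (ηinv : Matrix (Fin N) (Fin N) ℚ) (F : ℕ → R N) (g m : ℕ)
    (a : ℤ × Fin N) (Vs : List (ℤ × Fin N)) :
    Psi N ηinv F g m [a] Vs =
      quadraticPart ηinv F g m [a] Vs - Bracket N F g ((a.1 + (m : ℤ) + 1, a.2) :: Vs) +
        (-1) ^ (m + 1) * rightTerm F g m [a] Vs :=
  rfl

lemma ttildeSum_rightTerm {η : Matrix (Fin N) (Fin N) ℚ} {F : ℕ → R N} {g : ℕ}
    (hstring : StringEqHyp N η F g) (m : ℕ) {p : ℕ} (hp : 1 ≤ p) (x : Fin N)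
    (Vs : List (ℕ × Fin N)) :
    (ttildeSum fun q =>
        rightTerm F g (m + 1) [((p : ℤ), x), ((q.1 : ℤ) - 1, q.2)] (coordList N Vs)) =
      -rightTerm F g m [((p : ℤ), x)] (coordList N Vs) -
        rightTerm F g (m + 1) [((p : ℤ) - 1, x)] (coordList N Vs) := by
  have hlevel (n : ℕ) : (n : ℤ) + ((m + 1 : ℕ) : ℤ) + 1 = ((n + m + 2 : ℕ) : ℤ) := by
    push_cast; ring
  have hlower (n : ℕ) : ((n + m + 2 : ℕ) : ℤ) - 1 = n + m + 1 := by push_cast; ring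
  match Vs with
  | [] =>
    simp only [coordList, List.map_nil, rightTerm, hlevel]
    rw [ttildeSum_comm]
    simp only [ttildeSum_Bracket hstring le_rfl hp, hlower]
    rw [← map_neg, ← map_sub]
    rfl
  | [v] =>
    simp only [coordList, List.map_nil, List.map_cons, rightTerm, hlevel, List.cons_append,
      List.nil_append]
    have hrot (q : ℕ × Fin N) (b : ℤ × Fin N) :
        Bracket N F g [((p : ℤ), x), ((q.1 : ℤ) - 1, q.2), b] =
          Bracket N F g [b, ((p : ℤ), x), ((q.1 : ℤ) - 1, q.2)] := by
      rw [Bracket_cons, Bracket_swap, ← Bracket_cons, Bracket_swap]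
    simp only [hrot, ttildeSum_Bracket hstring le_rfl hp, hlower]
    rw [Bracket_swap, Bracket_swap _ _ _ ((p : ℤ) - 1, x)]
  | _ :: _ :: _ =>
    simp only [coordList, List.map_cons, rightTerm, neg_zero, sub_zero]
    exact map_zero ttildeSum

end StringOperator

/-- For `s ≥ 0`, `m ≥ 1`, a coordinate entry `W = τ_p(γ_x)` of positive
descendent level `p ≥ 1`, and coordinate entries `V_1, …, V_s`:
`Ψ_{2,s,g,m}(W S | V) = −Ψ_{1,s,g,m−1}(W | V) + Ψ_{1,s,g,m}(τ_−(W) | V)`. -/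
theorem psi_two_string_descendent (N : ℕ) [NeZero N]
    (η ηinv : Matrix (Fin N) (Fin N) ℚ)
    (hηsymm : ∀ α β, η α β = η β α)
    (hinv : η * ηinv = 1) (hinv' : ηinv * η = 1)
    (g : ℕ) (F : ℕ → R N) (hstring : StringEqHyp N η F g)
    (s m : ℕ) (hm : 1 ≤ m)
    (p : ℕ) (hp : 1 ≤ p) (x : Fin N)
    (Vs : List (ℕ × Fin N)) (hVs : Vs.length = s) :
    PsiS N ηinv F g m [((p : ℤ), x)] (coordList N Vs) =
      - Psi N ηinv F g (m - 1) [((p : ℤ), x)] (coordList N Vs)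
      + Psi N ηinv F g m [((p : ℤ) - 1, x)] (coordList N Vs) := by
  obtain ⟨m, rfl⟩ := Nat.exists_eq_add_of_le' hm
  have hlevel : (p : ℤ) - 1 + ((m + 1 : ℕ) : ℤ) + 1 = p + m + 1 := by push_cast; ring
  rw [PsiS, ← ttildeSum_apply, Nat.add_sub_cancel]
  simp only [List.cons_append, List.nil_append, Psi_pair, Psi_singleton, hlevel]
  have hsplit := map_add ttildeSum
    (fun q => quadraticPart ηinv F g (m + 1) [((p : ℤ), x), ((q.1 : ℤ) - 1, q.2)]
      (coordList N Vs))
    (fun q => (-1) ^ (m + 1 + 1) *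
      rightTerm F g (m + 1) [((p : ℤ), x), ((q.1 : ℤ) - 1, q.2)] (coordList N Vs))
  rw [ttildeSum_const_mul, ttildeSum_quadraticPart ηinv hstring m hp,
    ttildeSum_rightTerm hstring m hp] at hsplit
  refine (congrArg Neg.neg hsplit).trans ?_
  ring

end GWBigPhase
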